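/- arXiv:1511.02038 — 2 statements merged into one kernel-verified Lean document; each statement's English description precedes it below -/
import Mathlib

section
/- Let G be a 2-tree and uv ∈ E(G). If |N_G(u) ∩ N_G(v)| = n, then the graph G − {u, v} obtained by deleting the vertices u and v has exactly n connected components. -/
/-!
Fix an edge `uv` of the 2-tree `G`. Sending a common neighbour of `u` and `v` to its connected
component in `G - {u, v}` is a bijection onto the set of components. Both halves are encoded in
one labelling `f` of the vertices (`IsLabelling`): `f` is constant along the edges of
`G - {u, v}`, fixes every common neighbour of `u` and `v`, and sends every other vertex to a common
neighbour in the same component. Constancy makes the map injective, and reachability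
makes it surjective.

The labelling is built by induction on the 2-tree (`IsTwoTree.exists_isLabelling`). Let `z` be a
new vertex attached to the edge `xy`.
* If `{u, v} = {x, y}`, then `z` is an isolated vertex of `G - {u, v}` and gets itself as label.
* If `uv` is another old edge, then `z` inherits the label of an endpoint of `xy` outside
  `{u, v}`; when both endpoints are outside, their labels agree.
* If `uv = zx`, the only common neighbour is `y`, and every vertex must reach `y` avoiding `x`.
  The labelling for the old edge `xy` sends each vertex to a neighbour of `y` reachable from it
  outside `{x, y}`.
-/

open SimpleGraph

/-- `IsTwoTree V G` : the simple graph `G` on `ℕ` with support (vertex set) `V` is a 2-tree,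
defined inductively: a single edge is a 2-tree, and adding a new vertex `z` adjacent to
exactly the two endpoints `u, v` of an existing edge yields a 2-tree. -/
inductive IsTwoTree : Finset ℕ → SimpleGraph ℕ → Prop
  | base (u v : ℕ) (huv : u ≠ v) :
      IsTwoTree {u, v} (fromEdgeSet {s(u, v)})
  | grow {V : Finset ℕ} {G : SimpleGraph ℕ} (hG : IsTwoTree V G)
      (u v z : ℕ) (huv : G.Adj u v) (hz : z ∉ V) (hzu : z ≠ u) (hzv : z ≠ v) :
      IsTwoTree (insert z V) (G ⊔ fromEdgeSet {s(z, u), s(z, v)})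


/-! ### Labellings of `G - {u, v}` -/

/-- `a` and `b` are adjacent in `G`, and neither of them is `u` or `v`: adjacency in
`G - {u, v}`, as a relation on all of `ℕ`. -/
def AvoidAdj (G : SimpleGraph ℕ) (u v a b : ℕ) : Prop :=
  G.Adj a b ∧ a ≠ u ∧ a ≠ v ∧ b ≠ u ∧ b ≠ v

/-- `f` picks in each component of `G - {u, v}` the unique common neighbour of `u` and `v` it
contains. Values of `f` outside `V \ {u, v}` are irrelevant. -/
structure IsLabelling (V : Finset ℕ) (G : SimpleGraph ℕ) (u v : ℕ) (f : ℕ → ℕ) : Prop where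
  adj_left : ∀ w ∈ V, w ≠ u → w ≠ v → G.Adj u (f w)
  adj_right : ∀ w ∈ V, w ≠ u → w ≠ v → G.Adj v (f w)
  reach : ∀ w ∈ V, w ≠ u → w ≠ v → Relation.ReflTransGen (AvoidAdj G u v) w (f w)
  const : ∀ a b, AvoidAdj G u v a b → f a = f b
  fix : ∀ w, G.Adj u w → G.Adj v w → f w = w

theorem AvoidAdj.swap {G : SimpleGraph ℕ} {u v a b : ℕ} (h : AvoidAdj G u v a b) :
    AvoidAdj G v u a b :=
  ⟨h.1, h.2.2.1, h.2.1, h.2.2.2.2, h.2.2.2.1⟩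

theorem IsLabelling.swap {V : Finset ℕ} {G : SimpleGraph ℕ} {u v : ℕ} {f : ℕ → ℕ}
    (h : IsLabelling V G u v f) : IsLabelling V G v u f where
  adj_left w hw h1 h2 := h.adj_right w hw h2 h1
  adj_right w hw h1 h2 := h.adj_left w hw h2 h1
  reach w hw h1 h2 := Relation.ReflTransGen.mono (fun _ _ => AvoidAdj.swap) _ _ (h.reach w hw h2 h1)
  const a b hab := h.const a b hab.swap
  fix w h1 h2 := h.fix w h2 h1

/-! ### Attaching a new vertex -/

theorem IsTwoTree.mem_of_adj {V : Finset ℕ} {G : SimpleGraph ℕ} (hG : IsTwoTree V G) :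
    ∀ {a b : ℕ}, G.Adj a b → a ∈ V := by
  induction hG with
  | base u v huv =>
    intro a b h
    simp at h ⊢
    tauto
  | grow hG x y z hxy hz hzx hzy ih =>
    intro a b h
    have hx := ih hxy
    have hy := ih hxy.symm
    rw [Finset.mem_insert]
    simp only [sup_adj, fromEdgeSet_adj, Set.mem_insert_iff, Set.mem_singleton_iff,
      Sym2.eq_iff] at h
    rcases h with h | ⟨h, -⟩
    · exact Or.inr (ih h)
    · rcases h with (⟨rfl, rfl⟩ | ⟨rfl, rfl⟩) | (⟨rfl, rfl⟩ | ⟨rfl, rfl⟩) <;> simp [hx, hy]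

/-- Adjacency after attaching a new vertex `z` to `x` and `y`. -/
theorem grow_adj {G : SimpleGraph ℕ} {x y z : ℕ} (hzx : z ≠ x) (hzy : z ≠ y) (a b : ℕ) :
    (G ⊔ fromEdgeSet {s(z, x), s(z, y)}).Adj a b ↔
      G.Adj a b ∨ (a = z ∧ (b = x ∨ b = y)) ∨ (b = z ∧ (a = x ∨ a = y)) := by
  simp only [sup_adj, fromEdgeSet_adj, Set.mem_insert_iff, Set.mem_singleton_iff, Sym2.eq_iff]
  grind

/-- An old edge `uv`, when `x` is an endpoint of the attaching edge outside `{u, v}`: the new vertex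
inherits the label of `x`. -/
theorem IsLabelling.extend {V : Finset ℕ} {G G' : SimpleGraph ℕ} {u v x y z : ℕ} {f : ℕ → ℕ}
    (hV : ∀ {a b : ℕ}, G.Adj a b → a ∈ V) (hz : z ∉ V) (huv : G.Adj u v) (hxy : G.Adj x y)
    (hG' : ∀ a b, G'.Adj a b ↔
      G.Adj a b ∨ (a = z ∧ (b = x ∨ b = y)) ∨ (b = z ∧ (a = x ∨ a = y)))
    (h : IsLabelling V G u v f) (hxu : x ≠ u) (hxv : x ≠ v) :
    IsLabelling (insert z V) G' u v (Function.update f z (f x)) := by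
  have hle : ∀ a b, G.Adj a b → G'.Adj a b := fun a b hab => (hG' a b).2 (Or.inl hab)
  have hne : ∀ {a}, a ∈ V → a ≠ z := fun ha e => hz (e ▸ ha)
  have hx := hV hxy
  have hy := hV hxy.symm
  have hu := hne (hV huv)
  have hv := hne (hV huv.symm)
  have hfz : Function.update f z (f x) z = f x := by simp
  have hf : ∀ a, a ∈ V → Function.update f z (f x) a = f a := fun a ha => by simp [hne ha]
  have hmono : ∀ {a b}, Relation.ReflTransGen (AvoidAdj G u v) a b →
      Relation.ReflTransGen (AvoidAdj G' u v) a b :=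
    fun hab => Relation.ReflTransGen.mono (fun _ _ h => ⟨hle _ _ h.1, h.2⟩) _ _ hab
  refine ⟨?_, ?_, ?_, ?_, ?_⟩
  · intro w hw hwu hwv
    rcases Finset.mem_insert.1 hw with rfl | hw
    · rw [hfz]; exact hle _ _ (h.adj_left x hx hxu hxv)
    · rw [hf w hw]; exact hle _ _ (h.adj_left w hw hwu hwv)
  · intro w hw hwu hwv
    rcases Finset.mem_insert.1 hw with rfl | hw
    · rw [hfz]; exact hle _ _ (h.adj_right x hx hxu hxv)
    · rw [hf w hw]; exact hle _ _ (h.adj_right w hw hwu hwv)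
  · intro w hw hwu hwv
    rcases Finset.mem_insert.1 hw with rfl | hw
    · rw [hfz]
      exact .head ⟨(hG' _ _).2 (by simp), hwu, hwv, hxu, hxv⟩ (hmono (h.reach x hx hxu hxv))
    · rw [hf w hw]; exact hmono (h.reach w hw hwu hwv)
  ·
    -- An edge at `z` inside `G - {u, v}` ends in `x`, or in `y`, whose label is that of `x`.
    have key : ∀ b, b = x ∨ b = y → b ≠ u → b ≠ v → f b = f x := by
      rintro b (rfl | rfl) hbu hbv
      · rfl
      · exact (h.const _ _ ⟨hxy, hxu, hxv, hbu, hbv⟩).symm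
    have hmem : ∀ b, b = x ∨ b = y → b ∈ V := by
      rintro b (rfl | rfl) <;> assumption
    rintro a b ⟨hab, hau, hav, hbu, hbv⟩
    rcases (hG' a b).1 hab with hab | ⟨rfl, hb⟩ | ⟨rfl, ha⟩
    · rw [hf a (hV hab), hf b (hV hab.symm)]
      exact h.const _ _ ⟨hab, hau, hav, hbu, hbv⟩
    · rw [hfz, hf b (hmem b hb), key b hb hbu hbv]
    · rw [hfz, hf a (hmem a ha), key a ha hau hav]
  · intro w h1 h2
    -- `z` is not a common neighbour: its neighbours `x, y` would have to be `u, v`.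
    have huv' := huv.ne
    have h1 := (hG' u w).1 h1
    have h2 := (hG' v w).1 h2
    by_cases hw : w = z
    · subst hw
      have h3 : ∀ a, ¬ G.Adj a w := fun a ha => hz (hV ha.symm)
      have := h3 u
      have := h3 v
      grind
    · have hadj1 : G.Adj u w := by tauto
      have hadj2 : G.Adj v w := by tauto
      rw [hf w (hV hadj1.symm)]
      exact h.fix w hadj1 hadj2

/-- The attaching edge itself: the new vertex is an isolated vertex of `G - {u, v}` and is its
own label. -/
theorem IsLabelling.extend_self {V : Finset ℕ} {G G' : SimpleGraph ℕ} {x y z : ℕ} {f : ℕ → ℕ}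
    (hV : ∀ {a b : ℕ}, G.Adj a b → a ∈ V) (hz : z ∉ V) (hxy : G.Adj x y)
    (hG' : ∀ a b, G'.Adj a b ↔
      G.Adj a b ∨ (a = z ∧ (b = x ∨ b = y)) ∨ (b = z ∧ (a = x ∨ a = y)))
    (h : IsLabelling V G x y f) :
    IsLabelling (insert z V) G' x y (Function.update f z z) := by
  have hle : ∀ a b, G.Adj a b → G'.Adj a b := fun a b hab => (hG' a b).2 (Or.inl hab)
  have hne : ∀ {a}, a ∈ V → a ≠ z := fun ha e => hz (e ▸ ha)
  have hx := hne (hV hxy)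
  have hy := hne (hV hxy.symm)
  have hfz : Function.update f z z z = z := by simp
  have hf : ∀ a, a ∈ V → Function.update f z z a = f a := fun a ha => by simp [hne ha]
  refine ⟨?_, ?_, ?_, ?_, ?_⟩
  · intro w hw hwu hwv
    rcases Finset.mem_insert.1 hw with rfl | hw
    · rw [hfz]; exact (hG' _ _).2 (by simp)
    · rw [hf w hw]; exact hle _ _ (h.adj_left w hw hwu hwv)
  · intro w hw hwu hwv
    rcases Finset.mem_insert.1 hw with rfl | hw
    · rw [hfz]; exact (hG' _ _).2 (by simp)
    · rw [hf w hw]; exact hle _ _ (h.adj_right w hw hwu hwv)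
  · intro w hw hwu hwv
    rcases Finset.mem_insert.1 hw with rfl | hw
    · rw [hfz]
    · rw [hf w hw]
      exact Relation.ReflTransGen.mono (fun _ _ h => ⟨hle _ _ h.1, h.2⟩) _ _ (h.reach w hw hwu hwv)
  · rintro a b ⟨hab, hau, hav, hbu, hbv⟩
    have hab : G.Adj a b := by
      have := (hG' a b).1 hab
      tauto
    rw [hf a (hV hab), hf b (hV hab.symm)]
    exact h.const _ _ ⟨hab, hau, hav, hbu, hbv⟩
  · intro w h1 h2
    by_cases hw : w = z
    · rw [hw, hfz]
    · have h1 := (hG' x w).1 h1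
      have h2 := (hG' y w).1 h2
      have hadj1 : G.Adj x w := by tauto
      have hadj2 : G.Adj y w := by tauto
      rw [hf w (hV hadj1.symm)]
      exact h.fix w hadj1 hadj2

/-- A new edge `zx`: `y` is the only common neighbour, and `G - {z, x}` is connected because the
labelling for `xy` leads every vertex to a neighbour of `y`. -/
theorem IsLabelling.new_edge {V : Finset ℕ} {G G' : SimpleGraph ℕ} {x y z : ℕ} {f : ℕ → ℕ}
    (hV : ∀ {a b : ℕ}, G.Adj a b → a ∈ V) (hz : z ∉ V) (hxy : G.Adj x y)
    (hG' : ∀ a b, G'.Adj a b ↔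
      G.Adj a b ∨ (a = z ∧ (b = x ∨ b = y)) ∨ (b = z ∧ (a = x ∨ a = y)))
    (h : IsLabelling V G x y f) :
    IsLabelling (insert z V) G' z x (fun _ => y) := by
  have hne : ∀ {a}, a ∈ V → a ≠ z := fun ha e => hz (e ▸ ha)
  have hy := hne (hV hxy.symm)
  have hx := hne (hV hxy)
  refine ⟨?_, ?_, ?_, ?_, ?_⟩
  · intro w hw hwu hwv
    exact (hG' _ _).2 (by simp)
  · intro w hw hwu hwv
    exact (hG' _ _).2 (Or.inl hxy)
  · intro w hw hwz hwx
    have hw : w ∈ V := (Finset.mem_insert.1 hw).resolve_left hwz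
    by_cases hwy : w = y
    · rw [hwy]
    · have hr : Relation.ReflTransGen (AvoidAdj G' z x) w (f w) :=
        Relation.ReflTransGen.mono (fun a b hab =>
          ⟨(hG' _ _).2 (Or.inl hab.1), hne (hV hab.1), hab.2.1, hne (hV hab.1.symm), hab.2.2.2.1⟩)
          _ _ (h.reach w hw hwx hwy)
      have hl := h.adj_left w hw hwx hwy
      have hr' := h.adj_right w hw hwx hwy
      exact hr.tail ⟨(hG' _ _).2 (Or.inl hr'.symm), hne (hV hl.symm), hl.ne', hy, hxy.ne'⟩
  · intros; rfl
  · intro w h1 h2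
    have h1 := (hG' z w).1 h1
    have h3 : ¬ G.Adj z w := fun h => hz (hV h)
    have := h2.ne
    grind

/-! ### Existence of labellings -/

theorem IsTwoTree.exists_isLabelling {V : Finset ℕ} {G : SimpleGraph ℕ} (hG : IsTwoTree V G) :
    ∀ u v : ℕ, G.Adj u v → ∃ f, IsLabelling V G u v f := by
  induction hG with
  | base x y hxy =>
    intro u v huv
    refine ⟨id, ?_⟩
    simp only [fromEdgeSet_adj, Set.mem_singleton_iff, Sym2.eq_iff] at huv
    have hadj : ∀ a b, (fromEdgeSet {s(x, y)}).Adj a b ↔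
        ((a = x ∧ b = y) ∨ (a = y ∧ b = x)) ∧ a ≠ b := by
      intro a b
      simp only [fromEdgeSet_adj, Set.mem_singleton_iff, Sym2.eq_iff]
    constructor
    · intro w hw
      simp at hw
      grind
    · intro w hw
      simp at hw
      grind
    · intro w hw
      simp at hw
      grind
    · rintro a b ⟨hab, h⟩
      rw [hadj] at hab
      grind
    · intros; rfl
  | @grow V G hG x y z hxy hz hzx hzy ih =>
    intro u v huv
    have hV := fun {a b : ℕ} => hG.mem_of_adj (a := a) (b := b)
    have hG₁ := grow_adj (G := G) hzx hzy
    have hG₂ : ∀ a b, (G ⊔ fromEdgeSet {s(z, x), s(z, y)}).Adj a b ↔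
        G.Adj a b ∨ (a = z ∧ (b = y ∨ b = x)) ∨ (b = z ∧ (a = y ∨ a = x)) := by
      intro a b
      rw [hG₁, or_comm (a := b = x), or_comm (a := a = x)]
    generalize G ⊔ fromEdgeSet {s(z, x), s(z, y)} = G' at *
    obtain ⟨f, hf⟩ := ih x y hxy
    have hzx' := hf.new_edge hV hz hxy hG₁
    have hzy' := hf.swap.new_edge hV hz hxy.symm hG₂
    rcases (hG₁ u v).1 huv with huv | ⟨rfl, rfl | rfl⟩ | ⟨rfl, rfl | rfl⟩
    · obtain ⟨g, hg⟩ := ih u v huv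
      by_cases hx : x ≠ u ∧ x ≠ v
      · exact ⟨_, hg.extend hV hz huv hxy hG₁ hx.1 hx.2⟩
      by_cases hy : y ≠ u ∧ y ≠ v
      · exact ⟨_, hg.extend hV hz huv hxy.symm hG₂ hy.1 hy.2⟩
      have hne := hxy.ne
      have : (u = x ∧ v = y) ∨ (u = y ∧ v = x) := by grind
      rcases this with ⟨rfl, rfl⟩ | ⟨rfl, rfl⟩
      · exact ⟨_, hg.extend_self hV hz huv hG₁⟩
      · exact ⟨_, hg.extend_self hV hz huv hG₂⟩
    · exact ⟨_, hzx'⟩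
    · exact ⟨_, hzy'⟩
    · exact ⟨_, hzx'.swap⟩
    · exact ⟨_, hzy'.swap⟩

/-! ### Counting components -/

/-- Let `G` be a 2-tree and `uv ∈ E(G)`.  If `|N_G(u) ∩ N_G(v)| = n`, then deleting the
vertices `u` and `v` leaves a graph with exactly `n` connected components. -/
theorem two_tree_components_after_edge_deletion
    (V : Finset ℕ) (G : SimpleGraph ℕ) (hG : IsTwoTree V G)
    (u v : ℕ) (huv : G.Adj u v) (n : ℕ)
    (hn : (G.neighborSet u ∩ G.neighborSet v).ncard = n) :
    Nat.card ((G.induce ((V : Set ℕ) \ {u, v})).ConnectedComponent) = n := by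
  obtain ⟨f, hf⟩ := hG.exists_isLabelling u v huv
  rw [← hn, ← Nat.card_coe_set_eq]
  have hS : ∀ w ∈ G.neighborSet u ∩ G.neighborSet v, w ∈ (V : Set ℕ) \ {u, v} := by
    rintro w ⟨h1, h2⟩
    rw [mem_neighborSet] at h1 h2
    exact ⟨hG.mem_of_adj h1.symm, by simp [h1.ne', h2.ne']⟩
  have hconst : ∀ a b, (G.induce ((V : Set ℕ) \ {u, v})).Reachable a b → f a = f b := by
    rintro a b ⟨p⟩
    induction p with
    | nil => rfl
    | @cons a c d hac _ ih =>
      have ha := a.2.2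
      have hc := c.2.2
      simp only [Set.mem_insert_iff, Set.mem_singleton_iff, not_or] at ha hc
      exact (hf.const _ _ ⟨hac, ha.1, ha.2, hc.1, hc.2⟩).trans ih
  have hreach : ∀ a b, Relation.ReflTransGen (AvoidAdj G u v) a b →
      ∀ (ha : a ∈ (V : Set ℕ) \ {u, v}) (hb : b ∈ (V : Set ℕ) \ {u, v}),
        (G.induce ((V : Set ℕ) \ {u, v})).Reachable ⟨a, ha⟩ ⟨b, hb⟩ := by
    intro a b hab ha
    induction hab with
    | refl => intro _; exact Reachable.refl _
    | @tail b c _ hbc ih =>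
      intro hc
      have hb : b ∈ (V : Set ℕ) \ {u, v} :=
        ⟨hG.mem_of_adj hbc.1, by simp [hbc.2.1, hbc.2.2.1]⟩
      refine (ih hb).trans (Adj.reachable ?_)
      exact hbc.1
  symm
  refine Nat.card_congr (Equiv.ofBijective
    (fun w => (G.induce ((V : Set ℕ) \ {u, v})).connectedComponentMk ⟨w.1, hS w.1 w.2⟩) ⟨?_, ?_⟩)
  · intro a b hab
    have h := hconst _ _ (ConnectedComponent.exact hab)
    simp only [hf.fix a.1 a.2.1 a.2.2, hf.fix b.1 b.2.1 b.2.2] at h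
    exact Subtype.ext h
  · intro c
    induction c using ConnectedComponent.ind with
    | _ w =>
      obtain ⟨w, hw⟩ := w
      have hw' := hw.2
      simp only [Set.mem_insert_iff, Set.mem_singleton_iff, not_or] at hw'
      have hmem : f w ∈ G.neighborSet u ∩ G.neighborSet v :=
        ⟨hf.adj_left w hw.1 hw'.1 hw'.2, hf.adj_right w hw.1 hw'.1 hw'.2⟩
      exact ⟨⟨f w, hmem⟩, ConnectedComponent.sound
        (hreach _ _ (hf.reach w hw.1 hw'.1 hw'.2) hw (hS _ hmem)).symm⟩
end

section
/- Let G be a 2-tree and n ≥ 3. Then G contains an n-pyramid as an induced subgraph if and only if there exists an edge uv ∈ E(G) with |N_G(u) ∩ N_G(v)| ≥ n. -/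
/-!
If `uv` is an edge of a 2-tree `G` and `S` is a set of common neighbors of `u` and `v`, then no two
vertices of `S` are adjacent, since a 2-tree has no `K₄` (`IsTwoTree.no_K4`). So the subgraph
induced on `{u, v} ∪ S` arises from the edge `uv` by attaching the vertices of `S` one at a time to
`uv`; it is therefore a 2-tree (`IsTwoTree.isTwoTree_book`), and for `|S| = n` it is an `n`-pyramid.
Conversely, common neighbors in an induced subgraph are common neighbors in `G`, and `G` is finite.
-/

open SimpleGraph

/-- `H` (with vertex set `W`) is an `n`-pyramid: a 2-tree on `n + 2` vertices having an
edge `uv` such that `u` and `v` have exactly `n` common neighbors. -/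
def IsNPyramid (n : ℕ) (W : Finset ℕ) (H : SimpleGraph ℕ) : Prop :=
  IsTwoTree W H ∧ W.card = n + 2 ∧
    ∃ u v, H.Adj u v ∧ (H.neighborSet u ∩ H.neighborSet v).ncard = n

/-- `G` (with vertex set `V`) contains an `n`-pyramid as an induced subgraph: there is a
set of vertices `W ⊆ V` on which `G` induces an `n`-pyramid. -/
def ContainsNPyramid (V : Finset ℕ) (G : SimpleGraph ℕ) (n : ℕ) : Prop :=
  ∃ (W : Finset ℕ) (H : SimpleGraph ℕ), W ⊆ V ∧ IsNPyramid n W H ∧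
    ∀ a b, a ∈ W → b ∈ W → (G.Adj a b ↔ H.Adj a b)

theorem IsTwoTree.adj_mem {V : Finset ℕ} {G : SimpleGraph ℕ} (hG : IsTwoTree V G) :
    ∀ a b, G.Adj a b → a ∈ V ∧ b ∈ V := by
  induction hG with
  | base u v huv =>
    intro a b h
    simp only [fromEdgeSet_adj, Set.mem_singleton_iff, Sym2.eq_iff] at h
    grind
  | grow hG u v z huv hz hzu hzv ih =>
    intro a b h
    simp only [sup_adj, fromEdgeSet_adj, Set.mem_insert_iff, Set.mem_singleton_iff,
      Sym2.eq_iff] at h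
    have := ih u v huv
    grind

/-- A 2-tree has no `K₄`: the vertex added in an inductive step has only two neighbors. -/
theorem IsTwoTree.no_K4 {V : Finset ℕ} {G : SimpleGraph ℕ} (hG : IsTwoTree V G) :
    ∀ a b c d, G.Adj a b → G.Adj a c → G.Adj a d → G.Adj b c → G.Adj b d → ¬ G.Adj c d := by
  induction hG with
  | base u v huv =>
    intro a b c d
    simp only [fromEdgeSet_adj, Set.mem_singleton_iff, Sym2.eq_iff]
    grind
  | @grow V G hG u v z huv hz hzu hzv ih =>
    have hnz : ∀ x, ¬ G.Adj z x := fun x h => hz (hG.adj_mem z x h).1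
    have hnz' : ∀ x, ¬ G.Adj x z := fun x h => hz (hG.adj_mem x z h).2
    have key : ∀ a b, (G ⊔ fromEdgeSet {s(z, u), s(z, v)}).Adj a b →
        (a = z ∧ (b = u ∨ b = v)) ∨ (b = z ∧ (a = u ∨ a = v)) ∨ (a ≠ z ∧ b ≠ z ∧ G.Adj a b) := by
      intro a b h
      simp only [sup_adj, fromEdgeSet_adj, Set.mem_insert_iff, Set.mem_singleton_iff,
        Sym2.eq_iff] at h
      grind
    intro a b c d hab hac had hbc hbd hcd
    have h1 := hab.ne
    have h2 := hac.ne
    have h3 := had.ne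
    have h4 := hbc.ne
    have h5 := hbd.ne
    have h6 := hcd.ne
    have k1 := key _ _ hab
    have k2 := key _ _ hac
    have k3 := key _ _ had
    have k4 := key _ _ hbc
    have k5 := key _ _ hbd
    have k6 := key _ _ hcd
    have := ih a b c d
    clear key hab hac had hbc hbd hcd
    grind

/-- The subgraph of `G` induced on `W`, as a graph on `ℕ` in which the vertices outside `W`
are isolated. -/
def inducedOn (G : SimpleGraph ℕ) (W : Finset ℕ) : SimpleGraph ℕ where
  Adj a b := G.Adj a b ∧ a ∈ W ∧ b ∈ W
  symm := ⟨fun _ _ h => ⟨h.1.symm, h.2.2, h.2.1⟩⟩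
  loopless := ⟨fun _ h => h.1.ne rfl⟩

/-- An edge of a 2-tree together with any set of common neighbors of its ends induces a 2-tree. -/
theorem IsTwoTree.isTwoTree_book {V : Finset ℕ} {G : SimpleGraph ℕ} (hG : IsTwoTree V G)
    {u v : ℕ} (huv : G.Adj u v) (S : Finset ℕ) (hS : ∀ x ∈ S, G.Adj u x ∧ G.Adj v x) :
    IsTwoTree (S ∪ {u, v}) (inducedOn G (S ∪ {u, v})) := by
  induction S using Finset.induction_on with
  | empty =>
    convert IsTwoTree.base u v huv.ne using 1
    · simp
    · ext a b
      simp only [inducedOn, fromEdgeSet_adj, Set.mem_singleton_iff, Sym2.eq_iff]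
      have := huv.symm
      have := huv.ne
      have : G.Adj a b → a ≠ b := fun h => h.ne
      grind
  | insert z S hz ih =>
    have hzS := hS z (by simp)
    have ih := ih fun x hx => hS x (by simp [hx])
    have hzu := hzS.1.ne
    have hzv := hzS.2.ne
    have huv' : (inducedOn G (S ∪ {u, v})).Adj u v := ⟨huv, by simp, by simp⟩
    convert IsTwoTree.grow ih u v z huv' (by grind) hzu.symm hzv.symm using 1
    · exact Finset.insert_union z S {u, v}
    · ext a b
      simp only [inducedOn, sup_adj, fromEdgeSet_adj, Set.mem_insert_iff, Set.mem_singleton_iff,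
        Sym2.eq_iff]
      have hne : G.Adj a b → a ≠ b := fun h => h.ne
      have h1 := hzS.1.symm
      have h2 := hzS.2.symm
      -- `z` and a vertex of `S` are not adjacent, as they would span a `K₄` with `u` and `v`
      have h3 : ∀ x ∈ S, ¬ G.Adj z x := fun x hx =>
        have hx := hS x (by simp [hx])
        hG.no_K4 u v z x huv hzS.1 hx.1 hzS.2 hx.2
      have h4 : ∀ x ∈ S, ¬ G.Adj x z := fun x hx h => h3 x hx h.symm
      grind

/-- A 2-tree `G` contains an `n`-pyramid (`n ≥ 3`) as an induced subgraph if and only if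
there is an edge `uv ∈ E(G)` with `|N_G(u) ∩ N_G(v)| ≥ n`. -/
theorem contains_pyramid_iff_common_neighbors
    (V : Finset ℕ) (G : SimpleGraph ℕ) (hG : IsTwoTree V G) (n : ℕ) (hn : 3 ≤ n) :
    ContainsNPyramid V G n ↔
      ∃ u v, G.Adj u v ∧ n ≤ (G.neighborSet u ∩ G.neighborSet v).ncard := by
  constructor
  · rintro ⟨W, H, -, ⟨hH, -, u, v, huv, hcard⟩, hind⟩
    have hsub : ∀ a b, H.Adj a b → G.Adj a b := fun a b h =>
      (hind a b (hH.adj_mem a b h).1 (hH.adj_mem a b h).2).2 h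
    refine ⟨u, v, hsub u v huv, hcard ▸ Set.ncard_le_ncard ?_ ?_⟩
    · exact fun x hx => ⟨hsub u x hx.1, hsub v x hx.2⟩
    · exact V.finite_toSet.subset fun x hx => (hG.adj_mem u x hx.1).2
  · rintro ⟨u, v, huv, hle⟩
    obtain ⟨T, hT, hTcard⟩ := Set.exists_subset_card_eq hle
    have hTfin : T.Finite :=
      V.finite_toSet.subset fun x hx => (hG.adj_mem u x (hT hx).1).2
    lift T to Finset ℕ using hTfin
    have hS : ∀ x ∈ T, G.Adj u x ∧ G.Adj v x := fun x hx => hT hx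
    have huT : u ∉ T := fun h => (hS u h).1.ne rfl
    have hvT : v ∉ T := fun h => (hS v h).2.ne rfl
    rw [Set.ncard_coe_finset] at hTcard
    refine ⟨T ∪ {u, v}, inducedOn G (T ∪ {u, v}), ?_,
      ⟨hG.isTwoTree_book huv T hS, ?_, u, v, ⟨huv, by simp, by simp⟩, ?_⟩, ?_⟩
    · intro x hx
      have := hG.adj_mem u v huv
      have : x ∈ T → x ∈ V := fun h => (hG.adj_mem u x (hS x h).1).2
      grind
    · rw [Finset.card_union_of_disjoint (by simp [huT, hvT]), hTcard, Finset.card_pair huv.ne]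
    · rw [← hTcard, ← Set.ncard_coe_finset]
      congr 1
      ext x
      simp only [inducedOn, Set.mem_inter_iff, mem_neighborSet, Finset.mem_coe]
      have := huv.ne
      have : G.Adj u x → u ≠ x := fun h => h.ne
      have : G.Adj v x → v ≠ x := fun h => h.ne
      grind
    · intro a b ha hb
      exact ⟨fun h => ⟨h, ha, hb⟩, fun h => h.1⟩
end
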